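/- arXiv:2411.00022 — 2 statements merged into one kernel-verified Lean document; each statement's English description precedes it below -/
import Mathlib

section
/- Let A be an n×n complex matrix with k = Ind(A), let m be a positive integer, set A₁ = A A^{w_m} A, and let X be an n×n complex matrix. The following conditions are equivalent: (a) X = A^{w_m,†}; (b) R(X) = R(A^k) and A X = A₁ A^†; (c) R(X) = R(A^k) and A^* A X = A^* A₁ A^†; (d) R(X) = R(A^k) and A^k X = A₁^k A^†; (e) N(X) = N((A^k)^* A^{m+1} A^†) and X A = A^{w_m} A; (f) N(X) = N((A^k)^* A^{m+1} A^†) and X A A^* = A^{w_m} A A^*. -/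
open Matrix

/-- `X` is the Moore–Penrose inverse of `A`. -/
def IsMoorePenrose {p q : ℕ} (A : Matrix (Fin p) (Fin q) ℂ)
    (X : Matrix (Fin q) (Fin p) ℂ) : Prop :=
  A * X * A = A ∧ X * A * X = X ∧ (A * X)ᴴ = A * X ∧ (X * A)ᴴ = X * A

/-- `k` is the index of `A`: the smallest nonnegative integer `j` with
`rank (A ^ (j+1)) = rank (A ^ j)`. -/
def HasIndex {n : ℕ} (A : Matrix (Fin n) (Fin n) ℂ) (k : ℕ) : Prop :=
  (A ^ (k + 1)).rank = (A ^ k).rank ∧ ∀ j < k, (A ^ (j + 1)).rank ≠ (A ^ j).rank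

/-- `X` is the core-EP inverse of `A` (with `k = Ind A`). -/
def IsCoreEP {n : ℕ} (A : Matrix (Fin n) (Fin n) ℂ) (k : ℕ)
    (X : Matrix (Fin n) (Fin n) ℂ) : Prop :=
  X * A ^ (k + 1) = A ^ k ∧ A * X ^ 2 = X ∧ (A * X)ᴴ = A * X

/-- `X` is the Drazin inverse of `A` (with `k = Ind A`). -/
def IsDrazin {n : ℕ} (A : Matrix (Fin n) (Fin n) ℂ) (k : ℕ)
    (X : Matrix (Fin n) (Fin n) ℂ) : Prop :=
  X * A * X = X ∧ A * X = X * A ∧ X * A ^ (k + 1) = A ^ k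

theorem pow_mul_pow_succ_of_mul_sq {M : Type*} [Monoid M] {a e : M} (h : a * e ^ 2 = e) (j : ℕ) :
    a ^ j * e ^ (j + 1) = e := by
  induction j with
  | zero => simp
  | succ j ih =>
    calc a ^ (j + 1) * e ^ (j + 1 + 1) = a ^ j * ((a * e ^ 2) * e ^ j) := by
          rw [pow_succ a, show j + 1 + 1 = 2 + j by omega, pow_add e]
          simp only [mul_assoc]
      _ = e := by rw [h, ← pow_succ', ih]

theorem pow_mul_pow_mul_pow_of_mul_pow_succ {M : Type*} [Monoid M] {a e : M} {k : ℕ}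
    (h : e * a ^ (k + 1) = a ^ k) (j : ℕ) : e ^ j * (a ^ j * a ^ k) = a ^ k := by
  induction j with
  | zero => simp
  | succ j ih =>
    calc e ^ (j + 1) * (a ^ (j + 1) * a ^ k) = e ^ j * ((e * a ^ (k + 1)) * a ^ j) := by
          rw [pow_succ e, mul_assoc, mul_assoc, ← pow_add, ← pow_add]
          congr 3
          omega
      _ = e ^ j * (a ^ j * a ^ k) := by rw [h, ← pow_add, ← pow_add, add_comm]
      _ = a ^ k := ih

/-- If `p * (a * p) = a * p`, then powers of `a * p` on the range of `p` are powers of `a`. -/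
theorem mul_pow_mul_of_mul_mul {M : Type*} [Monoid M] {a p : M} (h : p * (a * p) = a * p)
    (hp : p * p = p) (j : ℕ) : (a * p) ^ j * p = a ^ j * p := by
  induction j with
  | zero => simp
  | succ j ih =>
    calc (a * p) ^ (j + 1) * p = (a * p) ^ j * (a * p) := by
          rw [pow_succ, mul_assoc, mul_assoc, hp]
      _ = ((a * p) ^ j * p) * (a * p) := by rw [mul_assoc, h]
      _ = a ^ (j + 1) * p := by rw [ih, mul_assoc, h, pow_succ, mul_assoc]

namespace Matrix

variable {l m n R : Type*} [CommRing R]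

theorem range_mulVecLin_mul_le [Fintype m] [Fintype n] (B : Matrix l m R) (C : Matrix m n R) :
    LinearMap.range (B * C).mulVecLin ≤ LinearMap.range B.mulVecLin := by
  rw [mulVecLin_mul]
  exact LinearMap.range_comp_le_range _ _

theorem ker_mulVecLin_le_mul [Fintype m] [Fintype n] (B : Matrix l m R) (C : Matrix m n R) :
    LinearMap.ker C.mulVecLin ≤ LinearMap.ker (B * C).mulVecLin := by
  rw [mulVecLin_mul]
  exact LinearMap.ker_le_ker_comp _ _

theorem mul_eq_self_of_range_le [Fintype l] [Fintype m] [Fintype n] {B : Matrix l m R} {C : Matrix l l R} {X : Matrix l n R}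
    (h : LinearMap.range X.mulVecLin ≤ LinearMap.range B.mulVecLin) (hCB : C * B = B) :
    C * X = X := by
  classical
  refine ext_of_mulVec_single fun i => ?_
  obtain ⟨w, hw⟩ := h ⟨Pi.single i 1, rfl⟩
  simp only [mulVecLin_apply] at hw
  rw [← mulVec_mulVec, ← hw, mulVec_mulVec, hCB]

theorem mul_eq_self_of_ker_le [Fintype n] {B : Matrix l n R} {C : Matrix n n R} {X : Matrix m n R}
    (h : LinearMap.ker B.mulVecLin ≤ LinearMap.ker X.mulVecLin) (hBC : B * C = B) :
    X * C = X := by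
  classical
  refine ext_of_mulVec_single fun i => ?_
  have hv : Pi.single i 1 - C *ᵥ Pi.single i 1 ∈ LinearMap.ker B.mulVecLin := by
    simp only [LinearMap.mem_ker, mulVecLin_apply, mulVec_sub, mulVec_mulVec, hBC, sub_self]
  have hX := h hv
  rw [LinearMap.mem_ker, mulVecLin_apply, mulVec_sub, mulVec_mulVec, sub_eq_zero] at hX
  exact hX.symm

end Matrix

/-- Characterizations of the `m`-WGMP inverse via range space, null space and
matrix equations. Here `A₁ = A A^{w_m} A`. -/
theorem m_WGMP_inverse_characterizations_range_null {n k m : ℕ}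
    (A AEP Adag X : Matrix (Fin n) (Fin n) ℂ)
    (hk : HasIndex A k) (hm : 0 < m)
    (hEP : IsCoreEP A k AEP)
    (hdag : IsMoorePenrose A Adag) :
    [X = (AEP ^ (m + 1) * A ^ m) * A * Adag,
     LinearMap.range X.mulVecLin = LinearMap.range (A ^ k).mulVecLin ∧
       A * X = (A * (AEP ^ (m + 1) * A ^ m) * A) * Adag,
     LinearMap.range X.mulVecLin = LinearMap.range (A ^ k).mulVecLin ∧
       Aᴴ * A * X = Aᴴ * (A * (AEP ^ (m + 1) * A ^ m) * A) * Adag,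
     LinearMap.range X.mulVecLin = LinearMap.range (A ^ k).mulVecLin ∧
       A ^ k * X = (A * (AEP ^ (m + 1) * A ^ m) * A) ^ k * Adag,
     LinearMap.ker X.mulVecLin = LinearMap.ker ((A ^ k)ᴴ * A ^ (m + 1) * Adag).mulVecLin ∧
       X * A = (AEP ^ (m + 1) * A ^ m) * A,
     LinearMap.ker X.mulVecLin = LinearMap.ker ((A ^ k)ᴴ * A ^ (m + 1) * Adag).mulVecLin ∧
       X * A * Aᴴ = (AEP ^ (m + 1) * A ^ m) * A * Aᴴ].TFAE := by
  obtain ⟨hE1, hE2, hE3⟩ := hEP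
  obtain ⟨hd1, -, hd3, hd4⟩ := hdag
  set P := AEP ^ (m + 1) * A ^ (m + 1) with hP
  have hWA : AEP ^ (m + 1) * A ^ m * A = P := by rw [hP, mul_assoc, pow_succ A]
  have hAWA : A * (AEP ^ (m + 1) * A ^ m) * A = A * P := by rw [mul_assoc, hWA]
  rw [hWA, hAWA]
  have hEfac (j : ℕ) : A ^ j * AEP ^ (j + 1) = AEP := pow_mul_pow_succ_of_mul_sq hE2 j
  have hcore (j : ℕ) : AEP ^ j * A ^ j * A ^ k = A ^ k := by
    rw [mul_assoc, pow_mul_pow_mul_pow_of_mul_pow_succ hE1]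
  have hPk : P * A ^ k = A ^ k := hcore (m + 1)
  obtain ⟨Y, hY⟩ : ∃ Y, P = A ^ k * Y := by
    refine ⟨AEP ^ (k + 1) * (AEP ^ m * A ^ (m + 1)), ?_⟩
    rw [← mul_assoc, hEfac, ← mul_assoc, ← pow_succ', hP]
  have hleft {C : Matrix (Fin n) (Fin n) ℂ} (h : C * A ^ k = A ^ k) : C * P = P := by
    rw [hY, ← mul_assoc, h]
  have hPP : P * P = P := hleft hPk
  have hPAP : P * (A * P) = A * P := by
    have hAP : A * P = A ^ k * (A * Y) := by
      rw [hY, ← mul_assoc, ← pow_succ', pow_succ, mul_assoc]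
    rw [hAP, ← mul_assoc, hPk]
  have hApow : A ^ (m + 1) * (Adag * A) = A ^ (m + 1) := by
    rw [pow_succ, mul_assoc, ← mul_assoc A, hd1]
  have hPdag : P * Adag * A = P := by rw [hP, mul_assoc, mul_assoc, hApow]
  have hpow : A ^ k * (P * Adag) = (A * P) ^ k * Adag := by
    rcases k with _ | k
    · have : P = 1 := by simpa using hPk
      simp [this]
    · rw [← mul_assoc, ← mul_pow_mul_of_mul_mul hPAP hPP, pow_succ (A * P), mul_assoc _ (A * P) P,
        mul_assoc A P P, hPP]
  have hrange : LinearMap.range (P * Adag).mulVecLin = LinearMap.range (A ^ k).mulVecLin := by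
    apply le_antisymm
    · rw [hY, mul_assoc]
      exact range_mulVecLin_mul_le _ _
    · have h : A ^ k = P * Adag * (A * A ^ k) := by rw [← mul_assoc, hPdag, hPk]
      rw [h]
      exact range_mulVecLin_mul_le _ _
  have hEAE : AEP * (A * AEP) = AEP := by
    have h := hcore 1
    rw [pow_one, pow_one] at h
    calc AEP * (A * AEP) = AEP * A * A ^ k * AEP ^ (k + 1) := by
          rw [mul_assoc _ (A ^ k), hEfac, mul_assoc]
      _ = AEP := by rw [h, hEfac]
  have hker : LinearMap.ker (P * Adag).mulVecLin =
      LinearMap.ker ((A ^ k)ᴴ * A ^ (m + 1) * Adag).mulVecLin := by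
    have hAEk : A * AEP * A ^ k = A ^ k := by
      rw [← hE1, ← mul_assoc, mul_assoc A, ← sq, hE2]
    have hstar : (A ^ k)ᴴ * (A * AEP) = (A ^ k)ᴴ := by
      rw [← hE3, ← conjTranspose_mul, hAEk]
    have hfac : AEP = AEP * (A * AEP ^ (k + 1))ᴴ * (A ^ k)ᴴ := by
      rw [mul_assoc, ← conjTranspose_mul, ← mul_assoc, ← pow_succ, pow_succ', mul_assoc, hEfac,
        hE3, hEAE]
    apply le_antisymm
    · have h : (A ^ k)ᴴ * A ^ (m + 1) * Adag = (A ^ k)ᴴ * A * A ^ m * (P * Adag) := by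
        rw [hP, ← mul_assoc, ← mul_assoc, mul_assoc _ (A ^ m), hEfac, mul_assoc _ A, hstar]
      rw [h]
      exact ker_mulVecLin_le_mul _ _
    · have h : P * Adag = AEP ^ m * (AEP * (A * AEP ^ (k + 1))ᴴ) *
          ((A ^ k)ᴴ * A ^ (m + 1) * Adag) := by
        rw [← mul_assoc, ← mul_assoc, mul_assoc (AEP ^ m), ← hfac, ← pow_succ]
      rw [h]
      exact ker_mulVecLin_le_mul _ _
  tfae_have 1 → 2 := by
    rintro rfl
    exact ⟨hrange, (mul_assoc _ _ _).symm⟩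
  tfae_have 2 → 3 := by
    rintro ⟨h, h'⟩
    exact ⟨h, by rw [mul_assoc, h', ← mul_assoc]⟩
  tfae_have 3 → 1 := by
    rintro ⟨h, h'⟩
    have hcancel : Adagᴴ * (Aᴴ * A) = A := by
      rw [← mul_assoc, ← conjTranspose_mul, hd3, hd1]
    have hEA : AEP * A * A ^ k = A ^ k := by simpa using hcore 1
    calc X = AEP * A * X := (mul_eq_self_of_range_le h.le hEA).symm
      _ = AEP * (Adagᴴ * (Aᴴ * A * X)) := by rw [← mul_assoc Adagᴴ, hcancel, mul_assoc]
      _ = AEP * (Adagᴴ * (Aᴴ * A)) * P * Adag := by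
          rw [h']
          simp only [mul_assoc]
      _ = P * Adag := by rw [hcancel, hleft hEA]
  tfae_have 1 → 4 := by
    rintro rfl
    exact ⟨hrange, hpow⟩
  tfae_have 4 → 1 := by
    rintro ⟨h, h'⟩
    calc X = AEP ^ k * A ^ k * X := (mul_eq_self_of_range_le h.le (hcore k)).symm
      _ = AEP ^ k * A ^ k * P * Adag := by
          rw [mul_assoc, h', ← hpow]
          simp only [mul_assoc]
      _ = P * Adag := by rw [hleft (hcore k)]
  tfae_have 1 → 5 := by
    rintro rfl
    exact ⟨hker, hPdag⟩
  tfae_have 5 → 6 := by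
    rintro ⟨h, h'⟩
    exact ⟨h, by rw [h']⟩
  tfae_have 6 → 1 := by
    rintro ⟨h, h'⟩
    have hcancel : A * Aᴴ * Adagᴴ = A := by
      rw [mul_assoc, ← conjTranspose_mul, hd4, ← mul_assoc, hd1]
    have hXA : X * A = P := by
      calc X * A = X * A * Aᴴ * Adagᴴ := by rw [mul_assoc X, mul_assoc X, hcancel]
        _ = P * Adag * (A * Aᴴ * Adagᴴ) := by
            rw [h', ← mul_assoc, ← mul_assoc, hPdag]
        _ = P := by rw [hcancel, hPdag]
    have hker' : LinearMap.ker (P * Adag).mulVecLin ≤ LinearMap.ker X.mulVecLin := by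
      rw [hker, h]
    have hproj : P * Adag * (A * Adag) = P * Adag := by rw [← mul_assoc, hPdag]
    rw [← mul_eq_self_of_ker_le hker' hproj, ← mul_assoc, hXA]
  tfae_finish
end

section
/- Let A be an n×n complex matrix with k = Ind(A), let m be a positive integer, set A₁ = A A^{w_m} A, and let X be an n×n complex matrix. The following conditions are equivalent: (a) X = A^{w_m,†}; (b) X A^{k+1} = A^k, rank(X) = rank(A^k) and A^* A X = A^* A₁ A^†; (c) X A^{k+1} = A^k, rank(X) = rank(A^k) and A X = A₁ A^†; (d) X A^{k+1} = A^k, rank(X) = rank(A^k) and A^k X = A₁^k A^†. -/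
open Matrix

/-- If the column space of `X` contains that of `B` and the ranks agree, then `X` factors
through `B`. -/
theorem Matrix.exists_eq_mul_of_mul_eq_of_rank_eq {n : ℕ}
    {X B C : Matrix (Fin n) (Fin n) ℂ} (h : X * C = B) (hr : X.rank = B.rank) :
    ∃ Y, X = B * Y := by
  have hle : LinearMap.range B.mulVecLin ≤ LinearMap.range X.mulVecLin := by
    rw [← h, Matrix.mulVecLin_mul]
    exact LinearMap.range_comp_le_range _ _
  have heq := Submodule.eq_of_le_of_finrank_eq hle hr.symm
  have hcol : ∀ j, ∃ y, B *ᵥ y = X *ᵥ Pi.single j 1 := fun j => by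
    have hj : X *ᵥ Pi.single j 1 ∈ LinearMap.range B.mulVecLin := by
      rw [heq]
      exact ⟨Pi.single j 1, rfl⟩
    exact hj
  choose y hy using hcol
  refine ⟨Matrix.of fun i j => y j i, ?_⟩
  ext i j
  have hij := congrFun (hy j) i
  rw [Matrix.mulVec_single_one] at hij
  exact hij.symm

open scoped ComplexOrder in
theorem Matrix.mul_eq_mul_of_conjTranspose_mul_self_mul_eq {n : ℕ}
    {A X Y : Matrix (Fin n) (Fin n) ℂ} (h : Aᴴ * A * X = Aᴴ * A * Y) : A * X = A * Y := by
  rw [← sub_eq_zero, ← mul_sub] at h ⊢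
  exact (Matrix.conjTranspose_mul_self_mul_eq_zero A _).mp h

section CoreEP

variable {n k : ℕ} {A E : Matrix (Fin n) (Fin n) ℂ}

theorem IsCoreEP.pow_mul_pow_add (h : IsCoreEP A k E) (j : ℕ) : E ^ j * A ^ (k + j) = A ^ k := by
  induction j with
  | zero => simp
  | succ j ih =>
    rw [pow_succ, show k + (j + 1) = k + 1 + j by ring, pow_add, mul_assoc, ← mul_assoc E, h.1,
      ← pow_add, ih]

theorem IsCoreEP.pow_mul_pow_succ (h : IsCoreEP A k E) (j : ℕ) : A ^ j * E ^ (j + 1) = E := by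
  induction j with
  | zero => simp
  | succ j ih =>
    have hE : A * (E * E) = E := by rw [← pow_two]; exact h.2.1
    calc A ^ (j + 1) * E ^ (j + 1 + 1) = A ^ j * (A * (E * E)) * E ^ j := by
          rw [pow_succ A, pow_succ' E, pow_succ' E]; simp only [mul_assoc]
      _ = E := by rw [hE, mul_assoc, ← pow_succ', ih]

/-- The `m`-weak group inverse maps `A ^ (k + 1)` to `A ^ k`. -/
theorem IsCoreEP.weakGroup_mul_pow (h : IsCoreEP A k E) (m : ℕ) :
    E ^ (m + 1) * A ^ m * A ^ (k + 1) = A ^ k := by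
  rw [mul_assoc, ← pow_add, show m + (k + 1) = k + (m + 1) by ring, h.pow_mul_pow_add]

theorem IsCoreEP.weakGroup_eq_pow_mul (h : IsCoreEP A k E) (m : ℕ) :
    E ^ (m + 1) * A ^ m = A ^ k * (E ^ (k + 1) * E ^ m * A ^ m) := by
  rw [← mul_assoc, ← mul_assoc, h.pow_mul_pow_succ, pow_succ']

/-- Left multiplication by a power of `A` is injective on the column space of `A ^ k`. -/
theorem IsCoreEP.eq_of_pow_mul_eq (h : IsCoreEP A k E) (j : ℕ)
    {Y Z : Matrix (Fin n) (Fin n) ℂ} (hYZ : A ^ j * (A ^ k * Y) = A ^ j * (A ^ k * Z)) :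
    A ^ k * Y = A ^ k * Z := by
  have hj := congrArg (E ^ j * ·) hYZ
  simpa only [← mul_assoc, mul_assoc (E ^ j), ← pow_add, add_comm j k,
    h.pow_mul_pow_add] using hj

theorem pow_eq_pow_mul_mul_of_mul_pow_succ {W T : Matrix (Fin n) (Fin n) ℂ}
    (hW : W * A ^ (k + 1) = A ^ k) (hT : W = A ^ k * T) :
    (A * W * A) ^ k = A ^ k * W * A := by
  have hA : ∀ j, (A * W * A) ^ j * A ^ k = A ^ (k + j) := by
    intro j
    induction j with
    | zero => simp
    | succ j ih =>
      have hstep : A * W * A * A ^ k = A ^ k * A := by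
        rw [mul_assoc (A * W), ← pow_succ', mul_assoc A, hW, ← pow_succ', pow_succ]
      rw [pow_succ, mul_assoc, hstep, ← mul_assoc, ih, ← pow_succ, add_assoc]
  cases k with
  | zero => simpa using hW.symm
  | succ k =>
    have hfac : A * W * A = A ^ (k + 1) * (A * T * A) := by
      rw [hT, ← mul_assoc, ← pow_succ', pow_succ]; simp only [mul_assoc]
    calc (A * W * A) ^ (k + 1) = (A * W * A) ^ k * A ^ (k + 1) * (A * T * A) := by
          rw [mul_assoc ((A * W * A) ^ k), ← hfac, pow_succ]
      _ = A ^ k * (A * W * A) := by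
          rw [hA, add_comm, pow_add, mul_assoc, ← hfac]
      _ = A ^ (k + 1) * W * A := by rw [pow_succ]; simp only [mul_assoc]

end CoreEP

/-- Characterizations of the `m`-WGMP inverse via `X A^{k+1} = A^k` and rank.
Here `A₁ = A A^{w_m} A`. -/
theorem m_WGMP_inverse_characterizations_rank {n k m : ℕ}
    (A AEP Adag X : Matrix (Fin n) (Fin n) ℂ)
    (hk : HasIndex A k) (hm : 0 < m)
    (hEP : IsCoreEP A k AEP)
    (hdag : IsMoorePenrose A Adag) :
    [X = (AEP ^ (m + 1) * A ^ m) * A * Adag,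
     X * A ^ (k + 1) = A ^ k ∧ X.rank = (A ^ k).rank ∧
       Aᴴ * A * X = Aᴴ * (A * (AEP ^ (m + 1) * A ^ m) * A) * Adag,
     X * A ^ (k + 1) = A ^ k ∧ X.rank = (A ^ k).rank ∧
       A * X = (A * (AEP ^ (m + 1) * A ^ m) * A) * Adag,
     X * A ^ (k + 1) = A ^ k ∧ X.rank = (A ^ k).rank ∧
       A ^ k * X = (A * (AEP ^ (m + 1) * A ^ m) * A) ^ k * Adag].TFAE := by
  have hW := hEP.weakGroup_mul_pow m
  have hT := hEP.weakGroup_eq_pow_mul m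
  generalize AEP ^ (m + 1) * A ^ m = W at hW hT ⊢
  generalize AEP ^ (k + 1) * AEP ^ m * A ^ m = T at hT
  have hpow := pow_eq_pow_mul_mul_of_mul_pow_succ hW hT
  have hfac : W * A * Adag = A ^ k * (T * A * Adag) := by rw [hT]; simp only [mul_assoc]
  have hXk : W * A * Adag * A ^ (k + 1) = A ^ k := by
    have hAA : A * Adag * A ^ (k + 1) = A ^ (k + 1) := by
      rw [pow_succ', ← mul_assoc, hdag.1]
    rw [mul_assoc W, mul_assoc W, hAA, hW]
  have hrank : (W * A * Adag).rank = (A ^ k).rank := by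
    apply le_antisymm
    · rw [hfac]; exact Matrix.rank_mul_le_left _ _
    · conv_lhs => rw [← hXk]
      exact Matrix.rank_mul_le_left _ _
  have key : ∀ j, X * A ^ (k + 1) = A ^ k → X.rank = (A ^ k).rank →
      A ^ j * X = A ^ j * (W * A * Adag) → X = W * A * Adag := by
    intro j h1 h2 h3
    obtain ⟨Y, rfl⟩ := Matrix.exists_eq_mul_of_mul_eq_of_rank_eq h1 h2
    rw [hfac] at h3 ⊢
    exact hEP.eq_of_pow_mul_eq j h3
  tfae_have 1 → 2 := by
    rintro rfl
    exact ⟨hXk, hrank, by simp only [mul_assoc]⟩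
  tfae_have 2 → 3 := by
    rintro ⟨h1, h2, h3⟩
    refine ⟨h1, h2, ?_⟩
    have hcancel : A * X = A * (W * A * Adag) :=
      Matrix.mul_eq_mul_of_conjTranspose_mul_self_mul_eq (by rw [h3]; simp only [mul_assoc])
    rw [hcancel]; simp only [mul_assoc]
  tfae_have 3 → 1 := by
    rintro ⟨h1, h2, h3⟩
    refine key 1 h1 h2 ?_
    rw [pow_one, h3]; simp only [mul_assoc]
  tfae_have 1 → 4 := by
    rintro rfl
    exact ⟨hXk, hrank, by rw [hpow]; simp only [mul_assoc]⟩
  tfae_have 4 → 1 := by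
    rintro ⟨h1, h2, h3⟩
    refine key k h1 h2 ?_
    rw [h3, hpow]; simp only [mul_assoc]
  tfae_finish
end
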